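/- For every constant γ ∈ (0,1), every η > 0 and every r₀, N₀ ∈ ℕ, there exist a finite bipartite graph G = (A, B, E) with |A| ≥ N₀ and a real K ≥ 1 such that, setting p = ⌈|A|^γ⌉: (a) there exists y from {S ⊆ A∪B : |S| ≤ r₀+1} to ℝ with y_∅ = 1 such that for all disjoint S, T ⊆ A∪B with |S|+|T| ≤ r₀: Σ_{i∈B} Σ_{J⊆T} (−1)^{|J|} y_{S∪J∪{i}} ≤ K · Σ_{J⊆T} (−1)^{|J|} y_{S∪J}; Σ_{j∈A} Σ_{J⊆T} (−1)^{|J|} y_{S∪J∪{j}} ≥ p · Σ_{J⊆T} (−1)^{|J|} y_{S∪J}; for every edge (j,i) ∈ E with j ∈ A, i ∈ B, Σ_{J⊆T} (−1)^{|J|} y_{S∪J∪{j}} ≤ Σ_{J⊆T} (−1)^{|J|} y_{S∪J∪{i}}; and 0 ≤ Σ_{J⊆T} (−1)^{|J|} y_{S∪J} ≤ 1; and (b) every subset U ⊆ A with |U| = p has at least K · |A|^{γ(1−γ)−η} neighbors in B. In particular the r₀-round Sherali–Adams relaxation of Small Set Bipartite Vertex Expansion with lifted objective has integrality gap at least |A|^{γ(1−γ)−η}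 on G. -/

import Mathlib

/-!
The gap instances are random bipartite graphs whose right vertices have coordinates. Let `q` be
large, `n = q ^ 2`, and call the elements of `Fin n` points. The right vertices are all `s`-tuples of points, there are
`N = q ^ (2 * t - 1)` left vertices, and each left vertex is joined to `d` random tuples. The
`d * s = e + t` points occurring in the tuples of a left vertex `j` are its base points. A
first-moment computation (`exists_hypergraph`) shows that for some choice

* any bounded number `h` of left vertices has at least `(e + 1 / 4) * h` base points in total
  (`LocallySparse`), so bounded pieces of this hypergraph look like forests, and
* every set of `p ≥ q ^ (2 * s - 1)` left vertices has at least `q ^ (2 * s - 1)` neighbors.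

The Sherali–Adams solution is `y_S = θ ^ ρ(S)` with `θ = q ^ (-x)`. It pretends that the points form
a random set of density `θ`, that a right vertex is chosen when all its points are, and that the
base points of a left vertex are correlated so that all of them are chosen together with probability
`θ ^ t`. Thus `ρ(S)` is the number of points of `S` minus a saving of `e` for every left vertex that
can be used; `rk` takes the best set `H` of left vertices, containing those of `S` and of bounded
size. Local sparsity bounds the size of an optimal `H` by four times the rank. This makes the
size restriction harmless, so `ρ` is submodular on small sets (`rk_submod`), and it bounds the
number of points in the closure of a small set (`card_closure_le`).

For a submodular integer rank the alternating sums `∑ J ⊆ T, (-1) ^ |J| * y_{S ∪ J}` are easily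
controlled: such a sum vanishes if some element of `T` does not increase the rank of `S`, and
otherwise it lies between `θ ^ ρ(S) / 2` and `θ ^ ρ(S)`. So it suffices to bound `∑ i, y_{S ∪ {i}}`
from above by `O((n * θ) ^ s) * y_S` (`sum_pow_le`), and to see that at least half of the left
vertices are generic with respect to any small set (`card_dependent_le`), which gives
`∑ j, y_{S ∪ {j}} ≥ N / 4 * θ ^ t * y_S`. These facts are combined in `exists_sheraliAdams`.

The exponent `x = 2 * (1 - 1 / t) * (1 - γ)` makes `N * θ ^ t / 4` exceed `p ≈ N ^ γ`, and
with `s = ⌊γ * t⌋` the quotient `q ^ (2 * s - 1) / (n * θ) ^ s` is `N ^ (γ * (1 - γ) - O(1 / t))`.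
In the code `t = τ + 1` and `s = σ + 1`.
-/

open Finset

/-- The set of neighbors in `B = Fin b` of a set `U ⊆ A = Fin a` in the bipartite graph
with edge set `E ⊆ A × B`. -/
def nbrs {a b : ℕ} (E : Finset (Fin a × Fin b)) (U : Finset (Fin a)) : Finset (Fin b) :=
  Finset.univ.filter fun i => ∃ j ∈ U, (j, i) ∈ E

/-! ### Alternating sums of powers of a rank -/

/-- `ρ` is a rank function on the sets of size at most `R`: it is monotone, vanishes on `∅` and has
diminishing returns there. Nothing is required of larger sets. The closure of `S` consists of the
elements `x` with `ρ (insert x S) = ρ S`. -/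
structure IsLocalRank {X : Type*} [DecidableEq X] (ρ : Finset X → ℕ) (R : ℕ) : Prop where
  empty : ρ ∅ = 0
  mono : ∀ S S' : Finset X, S ⊆ S' → S'.card ≤ R → ρ S ≤ ρ S'
  submod : ∀ (S U : Finset X) (x : X), (insert x (S ∪ U)).card ≤ R →
    ρ (insert x (S ∪ U)) + ρ S ≤ ρ (S ∪ U) + ρ (insert x S)

/-- The linearized value of the event that all of `S` and nothing of `T` is chosen, for the
pseudo-distribution `S ↦ θ ^ ρ S`. -/
noncomputable def cell {X : Type*} [DecidableEq X] (θ : ℝ) (ρ : Finset X → ℕ)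
    (S T : Finset X) : ℝ :=
  ∑ J ∈ T.powerset, (-1 : ℝ) ^ J.card * θ ^ ρ (S ∪ J)

section Cell

variable {X : Type*} [DecidableEq X] {θ : ℝ} {ρ : Finset X → ℕ} {R : ℕ}

lemma cell_empty (S : Finset X) : cell θ ρ S ∅ = θ ^ ρ S := by
  simp [cell]

lemma cell_insert (S T : Finset X) (x : X) (hx : x ∉ T) :
    cell θ ρ S (insert x T) = cell θ ρ S T - cell θ ρ (insert x S) T := by
  unfold cell
  rw [sum_powerset_insert hx, sub_eq_add_neg, ← sum_neg_distrib]
  congr 1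
  refine sum_congr rfl fun J hJ => ?_
  have hxJ : x ∉ J := fun h => hx (mem_powerset.1 hJ h)
  rw [card_insert_of_notMem hxJ, pow_succ, union_insert, insert_union]
  ring

lemma card_union_le_of {S T J : Finset X} (hJ : J ⊆ T) (h : S.card + T.card ≤ R) :
    (S ∪ J).card ≤ R :=
  (card_union_le _ _).trans ((Nat.add_le_add_left (card_le_card hJ) _).trans h)

/-- An element of the closure of `S` lies in the closure of every larger small set. -/
lemma IsLocalRank.insert_union_eq (hρ : IsLocalRank ρ R) {S J : Finset X} {x : X}
    (hc : (insert x (S ∪ J)).card ≤ R) (h : ρ (insert x S) = ρ S) :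
    ρ (insert x (S ∪ J)) = ρ (S ∪ J) := by
  have h1 := hρ.submod S J x hc
  have h2 := hρ.mono (S ∪ J) _ (subset_insert x _) hc
  omega

/-- A cell vanishes as soon as it forbids an element of the closure of `S`. -/
lemma cell_eq_zero (hρ : IsLocalRank ρ R) {S T : Finset X} (hST : S.card + T.card ≤ R)
    {x : X} (hx : x ∈ T) (h : ρ (insert x S) = ρ S) : cell θ ρ S T = 0 := by
  rw [← insert_erase hx, cell_insert _ _ _ (notMem_erase x T), sub_eq_zero]
  refine sum_congr rfl fun J hJ => ?_
  have hJT : insert x J ⊆ T :=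
    insert_subset hx ((mem_powerset.1 hJ).trans (erase_subset _ _))
  have hc : (insert x (S ∪ J)).card ≤ R := by
    rw [← union_insert]; exact card_union_le_of hJT hST
  rw [insert_union, hρ.insert_union_eq hc h]

/-- If no element of `T` lies in the closure of `S`, the term `J = ∅` dominates the cell. -/
lemma half_le_cell (hρ : IsLocalRank ρ R) (hθ : 0 < θ) (hθR : θ * 2 ^ R ≤ 1 / 2)
    {S T : Finset X} (hST : S.card + T.card ≤ R)
    (h : ∀ x ∈ T, ρ S + 1 ≤ ρ (insert x S)) : θ ^ ρ S / 2 ≤ cell θ ρ S T := by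
  have hθ1 : θ ≤ 1 := by
    have : (1 : ℝ) ≤ 2 ^ R := one_le_pow₀ (by norm_num)
    nlinarith
  unfold cell
  rw [← add_sum_erase _ _ (empty_mem_powerset T)]
  -- Every `J ≠ ∅` has rank at least `ρ S + 1`, and there are fewer than `2 ^ R` of them.
  have h1 : -(∑ J ∈ T.powerset.erase ∅, θ ^ (ρ S + 1)) ≤
      ∑ J ∈ T.powerset.erase ∅, (-1 : ℝ) ^ J.card * θ ^ ρ (S ∪ J) := by
    rw [← sum_neg_distrib]
    refine sum_le_sum fun J hJ => ?_
    rw [mem_erase, mem_powerset] at hJ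
    obtain ⟨x, hx⟩ := nonempty_iff_ne_empty.2 hJ.1
    have h2 : ρ S + 1 ≤ ρ (S ∪ J) := (h x (hJ.2 hx)).trans
      (hρ.mono _ _ (insert_subset (mem_union_right _ hx) subset_union_left)
        (card_union_le_of hJ.2 hST))
    have h3 : θ ^ ρ (S ∪ J) ≤ θ ^ (ρ S + 1) := pow_le_pow_of_le_one hθ.le hθ1 h2
    have h4 : 0 ≤ θ ^ ρ (S ∪ J) := by positivity
    rcases neg_one_pow_eq_or ℝ J.card with h5 | h5 <;> rw [h5] <;> linarith
  have h2 : ∑ J ∈ T.powerset.erase ∅, θ ^ (ρ S + 1) ≤ 2 ^ R * θ ^ (ρ S + 1) := by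
    rw [sum_const, nsmul_eq_mul]
    gcongr
    calc ((T.powerset.erase ∅).card : ℝ) ≤ (T.powerset.card : ℝ) := by
          exact_mod_cast card_le_card (erase_subset _ _)
      _ = 2 ^ T.card := by rw [card_powerset]; push_cast; rfl
      _ ≤ 2 ^ R := pow_le_pow_right₀ (by norm_num) (by omega)
  have h3 : 0 < θ ^ ρ S := by positivity
  have h4 : 2 ^ R * θ ^ (ρ S + 1) ≤ θ ^ ρ S / 2 := by
    rw [pow_succ]; nlinarith
  simp only [card_empty, pow_zero, one_mul, union_empty]
  linarith

lemma cell_nonneg (hρ : IsLocalRank ρ R) (hθ : 0 < θ) (hθR : θ * 2 ^ R ≤ 1 / 2)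
    {S T : Finset X} (hST : S.card + T.card ≤ R) : 0 ≤ cell θ ρ S T := by
  by_cases h : ∀ x ∈ T, ρ S + 1 ≤ ρ (insert x S)
  · exact le_trans (by positivity) (half_le_cell hρ hθ hθR hST h)
  · push Not at h
    obtain ⟨x, hx, h⟩ := h
    have h1 : (insert x S).card ≤ R := by
      have := card_insert_le x S
      have := card_pos.2 ⟨x, hx⟩
      omega
    have h2 := hρ.mono _ _ (subset_insert x S) h1
    rw [cell_eq_zero hρ hST hx (by omega)]

lemma cell_insert_left_le (hρ : IsLocalRank ρ R) (hθ : 0 < θ) (hθR : θ * 2 ^ R ≤ 1 / 2)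
    {S T : Finset X} (hST : S.card + T.card + 1 ≤ R) (x : X) :
    cell θ ρ (insert x S) T ≤ cell θ ρ S T := by
  by_cases hx : x ∈ T
  · rw [cell_eq_zero hρ (S := insert x S) _ hx (by simp)]
    · exact cell_nonneg hρ hθ hθR (by omega)
    · have := card_insert_le x S
      omega
  · have h := cell_nonneg hρ hθ hθR (S := S) (T := insert x T)
      (by have := card_insert_le x T; omega)
    rw [cell_insert _ _ _ hx] at h
    linarith

lemma cell_le (hρ : IsLocalRank ρ R) (hθ : 0 < θ) (hθR : θ * 2 ^ R ≤ 1 / 2)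
    {S T : Finset X} (hST : S.card + T.card ≤ R) : cell θ ρ S T ≤ θ ^ ρ S := by
  induction T using Finset.induction_on with
  | empty => rw [cell_empty]
  | insert x T hx ih =>
    rw [card_insert_of_notMem hx] at hST
    rw [cell_insert _ _ _ hx]
    have h1 := ih (by omega)
    have h2 := cell_nonneg hρ hθ hθR (S := insert x S) (T := T)
      (by have := card_insert_le x S; omega)
    linarith

end Cell

/-- A local rank `ρ` on the vertices yields the Sherali–Adams solution `S ↦ θ ^ ρ S`, provided that
every right vertex lies in the closure of each left neighbor (`hE`), most right vertices increase
the rank so much that the sum of `θ ^ ρ` over them is bounded (`hB`), left vertices increase the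
rank by at most `t` (`hA1`), and at least half of them do so by `t` or more
over every set `insert x S` with `x ∈ T` (`hA2`). -/
theorem sheraliAdams_of_localRank {α β : Type*} [Fintype α] [Fintype β] [DecidableEq α]
    [DecidableEq β] {θ : ℝ} {ρ : Finset (α ⊕ β) → ℕ} {r t : ℕ} {p K : ℝ} (E : Finset (α × β))
    (hρ : IsLocalRank ρ (r + 2)) (hθ : 0 < θ) (hθR : θ * 2 ^ (r + 2) ≤ 1 / 2)
    (hE : ∀ ji ∈ E, ∀ S : Finset (α ⊕ β), S.card ≤ r →
      ρ (insert (Sum.inr ji.2) (insert (Sum.inl ji.1) S)) = ρ (insert (Sum.inl ji.1) S))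
    (hB : ∀ S : Finset (α ⊕ β), S.card ≤ r →
      ∑ i : β, θ ^ ρ (insert (Sum.inr i) S) ≤ K / 2 * θ ^ ρ S)
    (hK : 0 ≤ K)
    (hp0 : 0 ≤ p)
    (hp : p ≤ Fintype.card α / 4 * θ ^ t)
    (hA1 : ∀ (S : Finset (α ⊕ β)) (j : α), S.card ≤ r →
      ρ (insert (Sum.inl j) S) ≤ ρ S + t)
    (hA2 : ∀ S T : Finset (α ⊕ β), S.card + T.card ≤ r →
      (Fintype.card α : ℝ) / 2 ≤ ((univ.filter fun j : α => ∀ x ∈ T,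
        ρ (insert x S) + t ≤ ρ (insert (Sum.inl j) (insert x S))).card : ℝ)) :
    ∃ y : Finset (α ⊕ β) → ℝ,
        y ∅ = 1 ∧
        ∀ S T : Finset (α ⊕ β), Disjoint S T → S.card + T.card ≤ r →
          ((∑ i : β, ∑ J ∈ T.powerset, (-1 : ℝ) ^ J.card * y (S ∪ J ∪ {Sum.inr i})) ≤
              K * ∑ J ∈ T.powerset, (-1 : ℝ) ^ J.card * y (S ∪ J)) ∧
          (p * (∑ J ∈ T.powerset, (-1 : ℝ) ^ J.card * y (S ∪ J)) ≤
              ∑ j : α, ∑ J ∈ T.powerset, (-1 : ℝ) ^ J.card * y (S ∪ J ∪ {Sum.inl j})) ∧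
          (∀ ji ∈ E,
            ∑ J ∈ T.powerset, (-1 : ℝ) ^ J.card * y (S ∪ J ∪ {Sum.inl ji.1}) ≤
              ∑ J ∈ T.powerset, (-1 : ℝ) ^ J.card * y (S ∪ J ∪ {Sum.inr ji.2})) ∧
          (0 ≤ ∑ J ∈ T.powerset, (-1 : ℝ) ^ J.card * y (S ∪ J)) ∧
          (∑ J ∈ T.powerset, (-1 : ℝ) ^ J.card * y (S ∪ J) ≤ 1) := by
  refine ⟨fun S => θ ^ ρ S, by simp [hρ.empty], fun S T _ hST => ?_⟩
  have key : ∀ x : α ⊕ β, ∑ J ∈ T.powerset, (-1 : ℝ) ^ J.card * θ ^ ρ (S ∪ J ∪ {x}) =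
      cell θ ρ (insert x S) T := fun x => by
    refine sum_congr rfl fun J _ => ?_
    rw [insert_union, union_comm _ {x}, ← insert_eq]
  have key0 : ∑ J ∈ T.powerset, (-1 : ℝ) ^ J.card * θ ^ ρ (S ∪ J) = cell θ ρ S T := rfl
  simp only [key, key0]
  have hθ1 : θ ≤ 1 := by
    have : (1 : ℝ) ≤ 2 ^ (r + 2) := one_le_pow₀ (by norm_num)
    nlinarith
  have hcS : ∀ x : α ⊕ β, (insert x S).card ≤ S.card + 1 := fun x => card_insert_le x S
  have hnn : ∀ x : α ⊕ β, 0 ≤ cell θ ρ (insert x S) T := fun x =>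
    cell_nonneg hρ hθ hθR (by have := hcS x; omega)
  have hle : ∀ x : α ⊕ β, cell θ ρ (insert x S) T ≤ cell θ ρ S T := fun x =>
    cell_insert_left_le hρ hθ hθR (by omega) x
  have hyS : 0 < θ ^ ρ S := by positivity
  have h0 : 0 ≤ cell θ ρ S T := cell_nonneg hρ hθ hθR (by omega)
  refine ⟨?_, ?_, ?_, h0, (cell_le hρ hθ hθR (by omega)).trans (pow_le_one₀ hθ.le hθ1)⟩
  · by_cases h : ∀ x ∈ T, ρ S + 1 ≤ ρ (insert x S)
    · have h1 := half_le_cell hρ hθ hθR (S := S) (T := T) (by omega) h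
      calc ∑ i : β, cell θ ρ (insert (Sum.inr i) S) T
          ≤ ∑ i : β, θ ^ ρ (insert (Sum.inr i) S) := sum_le_sum fun i _ =>
            cell_le hρ hθ hθR (by have := hcS (Sum.inr i); omega)
        _ ≤ K / 2 * θ ^ ρ S := hB S (by omega)
        _ = K * (θ ^ ρ S / 2) := by ring
        _ ≤ K * cell θ ρ S T := by gcongr
    · push Not at h
      obtain ⟨x, hx, h⟩ := h
      have h2 := hρ.mono _ _ (subset_insert x S) (by have := hcS x; omega)
      have h3 : cell θ ρ S T = 0 := cell_eq_zero hρ (by omega) hx (by omega)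
      rw [h3, mul_zero]
      exact sum_nonpos fun i _ => by rw [← h3]; exact hle _
  · by_cases h : ∀ x ∈ T, ρ S + 1 ≤ ρ (insert x S)
    · set good := univ.filter fun j : α => ∀ x ∈ T,
        ρ (insert x S) + t ≤ ρ (insert (Sum.inl j) (insert x S)) with hgood
      have h2 : ∀ j ∈ good, θ ^ (ρ S + t) / 2 ≤ cell θ ρ (insert (Sum.inl j) S) T := by
        intro j hj
        have hj1 := hA1 S j (by omega)
        refine le_trans ?_ (half_le_cell hρ hθ hθR (by have := hcS (Sum.inl j); omega) ?_)
        · gcongr ?_ / 2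
          exact pow_le_pow_of_le_one hθ.le hθ1 hj1
        · intro x hx
          rw [hgood, mem_filter] at hj
          have h4 := hj.2 x hx
          have h5 := h x hx
          rw [Finset.insert_comm x]
          omega
      calc p * cell θ ρ S T ≤ p * θ ^ ρ S := by
            gcongr; exact cell_le hρ hθ hθR (by omega)
        _ ≤ (Fintype.card α / 4 * θ ^ t) * θ ^ ρ S := by gcongr
        _ = Fintype.card α / 2 * (θ ^ (ρ S + t) / 2) := by rw [pow_add]; ring
        _ ≤ good.card * (θ ^ (ρ S + t) / 2) := by
            gcongr
            exact hA2 S T hST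
        _ = ∑ j ∈ good, θ ^ (ρ S + t) / 2 := by rw [sum_const, nsmul_eq_mul]
        _ ≤ ∑ j ∈ good, cell θ ρ (insert (Sum.inl j) S) T := sum_le_sum h2
        _ ≤ ∑ j : α, cell θ ρ (insert (Sum.inl j) S) T :=
            sum_le_sum_of_subset_of_nonneg (subset_univ _) fun j _ _ => hnn _
    · push Not at h
      obtain ⟨x, hx, h⟩ := h
      have h2 := hρ.mono _ _ (subset_insert x S) (by have := hcS x; omega)
      have h3 : cell θ ρ S T = 0 := cell_eq_zero hρ (by omega) hx (by omega)
      rw [h3, mul_zero]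
      exact sum_nonneg fun j _ => hnn _
  · intro ji hji
    -- The neighbor `ji.2` is in the closure of `ji.1`, so it may be added to the set for free.
    have h1 : cell θ ρ (insert (Sum.inl ji.1) S) T =
        cell θ ρ (insert (Sum.inl ji.1) (insert (Sum.inr ji.2) S)) T := by
      refine sum_congr rfl fun J hJ => ?_
      have hJc := card_le_card (mem_powerset.1 hJ)
      have h2 : (insert (Sum.inl ji.1) S ∪ J).card ≤ r + 1 := by
        have := card_union_le (insert (Sum.inl ji.1) S) J
        have := hcS (Sum.inl ji.1)
        omega
      rw [Finset.insert_comm, insert_union (Sum.inr ji.2), hρ.insert_union_eq]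
      · have := card_insert_le (Sum.inr ji.2) (insert (Sum.inl ji.1) S ∪ J)
        omega
      · exact hE ji hji S (by omega)
    rw [h1]
    exact cell_insert_left_le hρ hθ hθR (by have := hcS (Sum.inr ji.2); omega) _

/-! ### The rank of a locally sparse hypergraph -/

/-- The truncated rank of a set `A` of hyperedges together with a set `W` of points: the least value
of `|⋃ H ∪ W| - e * |H|` over all `H ⊇ A` with at most `M` hyperedges. The subtraction is encoded by
moving `e * |H|` to the other side, so negative values count as `0`; the junk value `0` of an empty
infimum occurs only for `|A| > M`. -/
noncomputable def rk {α β : Type*} [DecidableEq β] (base : α → Finset β) (e M : ℕ)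
    (A : Finset α) (W : Finset β) : ℕ :=
  sInf {m | ∃ H : Finset α, A ⊆ H ∧ H.card ≤ M ∧ (H.biUnion base ∪ W).card ≤ m + e * H.card}

/-- Any `h ≤ M` hyperedges cover at least `(e + 1 / 4) * h` points. -/
def LocallySparse {α β : Type*} [DecidableEq β] (base : α → Finset β) (e M : ℕ) : Prop :=
  ∀ H : Finset α, H.card ≤ M → (4 * e + 1) * H.card ≤ 4 * (H.biUnion base).card

section Rank

variable {α β : Type*} [DecidableEq β] {base : α → Finset β} {e M : ℕ}

lemma rk_le {A H : Finset α} {W : Finset β} {m : ℕ} (h1 : A ⊆ H) (h2 : H.card ≤ M)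
    (h3 : (H.biUnion base ∪ W).card ≤ m + e * H.card) : rk base e M A W ≤ m :=
  Nat.sInf_le ⟨H, h1, h2, h3⟩

lemma exists_rk {A : Finset α} (W : Finset β) (hA : A.card ≤ M) :
    ∃ H : Finset α, A ⊆ H ∧ H.card ≤ M ∧
      (H.biUnion base ∪ W).card ≤ rk base e M A W + e * H.card :=
  Nat.sInf_mem (s := {m | ∃ H : Finset α, A ⊆ H ∧ H.card ≤ M ∧
      (H.biUnion base ∪ W).card ≤ m + e * H.card}) ⟨_, A, Subset.rfl, hA, Nat.le_add_right _ _⟩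

/-- A set `H` that witnesses a rank of at most `m` has at most `4 * m` hyperedges, independently of
the truncation bound `M`. -/
lemma LocallySparse.card_le (hs : LocallySparse base e M) {H : Finset α} {W : Finset β} {m : ℕ}
    (h2 : H.card ≤ M) (h3 : (H.biUnion base ∪ W).card ≤ m + e * H.card) : H.card ≤ 4 * m := by
  have h4 := hs H h2
  have h5 : (H.biUnion base).card ≤ (H.biUnion base ∪ W).card := card_le_card subset_union_left
  nlinarith

lemma rk_mono {A A' : Finset α} {W W' : Finset β} (hA : A ⊆ A') (hW : W ⊆ W')
    (hM : A'.card ≤ M) : rk base e M A W ≤ rk base e M A' W' := by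
  obtain ⟨H, h1, h2, h3⟩ := exists_rk (base := base) (e := e) W' hM
  exact rk_le (hA.trans h1) h2 ((card_le_card (union_subset_union_right hW)).trans h3)

lemma rk_le_card {t : ℕ} (hb : ∀ j, (base j).card ≤ e + t) {A : Finset α} (W : Finset β)
    (hM : A.card ≤ M) : rk base e M A W ≤ W.card + t * A.card := by
  refine rk_le Subset.rfl hM ?_
  have h1 := card_union_le (A.biUnion base) W
  have h2 : (A.biUnion base).card ≤ A.card * (e + t) :=
    card_biUnion_le_card_mul _ _ _ fun j _ => hb j
  nlinarith

lemma rk_insert_right_le {A : Finset α} (W : Finset β) (v : β) (hM : A.card ≤ M) :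
    rk base e M A (insert v W) ≤ rk base e M A W + 1 := by
  obtain ⟨H, h1, h2, h3⟩ := exists_rk (base := base) (e := e) W hM
  refine rk_le h1 h2 ?_
  rw [union_insert]
  have := card_insert_le v (H.biUnion base ∪ W)
  omega

lemma rk_insert_left_le [DecidableEq α] (hs : LocallySparse base e M) {t : ℕ}
    (hb : ∀ j, (base j).card ≤ e + t) {A : Finset α} {W : Finset β} (hA : A.card ≤ M)
    (hM : 4 * rk base e M A W + 1 ≤ M) (j : α) :
    rk base e M (insert j A) W ≤ rk base e M A W + t := by
  obtain ⟨H, h1, h2, h3⟩ := exists_rk (base := base) (e := e) W hA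
  have h4 := hs.card_le h2 h3
  by_cases hj : j ∈ H
  · exact rk_le (insert_subset hj h1) h2 (by omega)
  · refine rk_le (insert_subset_insert j h1) (by rw [card_insert_of_notMem hj]; omega) ?_
    rw [card_insert_of_notMem hj, biUnion_insert, union_assoc]
    have := card_union_le (base j) (H.biUnion base ∪ W)
    have := hb j
    nlinarith

lemma rk_of_subset_biUnion {A : Finset α} {W W' : Finset β} (hM : A.card ≤ M)
    (hW : W' ⊆ W ∪ A.biUnion base) : rk base e M A W' ≤ rk base e M A W := by
  obtain ⟨H, h1, h2, h3⟩ := exists_rk (base := base) (e := e) W hM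
  refine rk_le h1 h2 ((card_le_card ?_).trans h3)
  refine union_subset subset_union_left (hW.trans (union_subset subset_union_right ?_))
  exact (biUnion_subset_biUnion_of_subset_left _ h1).trans subset_union_left

/-- The function `H ↦ |⋃ H ∪ W| - e * |H|` is submodular, so union and intersection of optimal sets
bound the ranks on the left; by `LocallySparse.card_le` the union obeys the truncation bound. -/
lemma rk_submod [DecidableEq α] (hs : LocallySparse base e M) {A₁ A₂ : Finset α} {W₁ W₂ : Finset β}
    (hA₁ : A₁.card ≤ M) (hA₂ : A₂.card ≤ M)
    (hM : 4 * rk base e M A₁ W₁ + 4 * rk base e M A₂ W₂ ≤ M) :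
    rk base e M (A₁ ∪ A₂) (W₁ ∪ W₂) + rk base e M (A₁ ∩ A₂) (W₁ ∩ W₂) ≤
      rk base e M A₁ W₁ + rk base e M A₂ W₂ := by
  obtain ⟨H₁, h11, h12, h13⟩ := exists_rk (base := base) (e := e) W₁ hA₁
  obtain ⟨H₂, h21, h22, h23⟩ := exists_rk (base := base) (e := e) W₂ hA₂
  have h14 := hs.card_le h12 h13
  have h24 := hs.card_le h22 h23
  have hUI := card_union_add_card_inter H₁ H₂
  have hUc : (H₁ ∪ H₂).card ≤ M := by omega
  have hIc : (H₁ ∩ H₂).card ≤ M := by omega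
  have key : ((H₁ ∪ H₂).biUnion base ∪ (W₁ ∪ W₂)).card +
      ((H₁ ∩ H₂).biUnion base ∪ (W₁ ∩ W₂)).card ≤
      (H₁.biUnion base ∪ W₁).card + (H₂.biUnion base ∪ W₂).card := by
    rw [← card_union_add_card_inter (H₁.biUnion base ∪ W₁)]
    refine Nat.add_le_add (card_le_card ?_) (card_le_card ?_)
    · rw [union_biUnion]
      intro x
      simp only [mem_union]
      tauto
    · refine union_subset (subset_inter ?_ ?_) (inter_subset_inter subset_union_right
        subset_union_right)
      · exact (biUnion_subset_biUnion_of_subset_left _ inter_subset_left).trans subset_union_left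
      · exact (biUnion_subset_biUnion_of_subset_left _ inter_subset_right).trans subset_union_left
  -- By sparsity the natural subtractions in `hU` and `hI` below do not truncate.
  have hU1 : e * (H₁ ∪ H₂).card ≤ ((H₁ ∪ H₂).biUnion base ∪ (W₁ ∪ W₂)).card := by
    have := hs _ hUc
    have := card_le_card (subset_union_left : (H₁ ∪ H₂).biUnion base ⊆ _ ∪ (W₁ ∪ W₂))
    nlinarith
  have hI1 : e * (H₁ ∩ H₂).card ≤ ((H₁ ∩ H₂).biUnion base ∪ (W₁ ∩ W₂)).card := by
    have := hs _ hIc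
    have := card_le_card (subset_union_left : (H₁ ∩ H₂).biUnion base ⊆ _ ∪ (W₁ ∩ W₂))
    nlinarith
  have hU := rk_le (base := base) (e := e) (W := W₁ ∪ W₂)
    (m := ((H₁ ∪ H₂).biUnion base ∪ (W₁ ∪ W₂)).card - e * (H₁ ∪ H₂).card)
    (union_subset_union h11 h21) hUc (by omega)
  have hI := rk_le (base := base) (e := e) (W := W₁ ∩ W₂)
    (m := ((H₁ ∩ H₂).biUnion base ∪ (W₁ ∩ W₂)).card - e * (H₁ ∩ H₂).card)
    (inter_subset_inter h11 h21) hIc (by omega)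
  have hmul : e * (H₁ ∪ H₂).card + e * (H₁ ∩ H₂).card = e * H₁.card + e * H₂.card := by
    rw [← mul_add, ← mul_add, hUI]
  omega

/-- The closure of `(A, W)` has bounded size: by submodularity, adding all of it to `W` keeps the
rank `m`, and an optimal `H` for the enlarged set has `|H| ≤ 4 * m`, so that the set has at most
`m + e * |H| ≤ (4 * e + 1) * m` points. -/
lemma card_closure_le [DecidableEq α] [Fintype β] (hs : LocallySparse base e M)
    {A : Finset α} {W : Finset β} (hA : A.card ≤ M) (hM : 8 * rk base e M A W ≤ M) :
    (univ.filter fun v => rk base e M A (insert v W) ≤ rk base e M A W).card ≤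
      (4 * e + 1) * rk base e M A W := by
  set Z := univ.filter fun v => rk base e M A (insert v W) ≤ rk base e M A W with hZ
  have key : ∀ Z' ⊆ Z, rk base e M A (W ∪ Z') ≤ rk base e M A W := by
    intro Z'
    induction Z' using Finset.induction_on with
    | empty => simp
    | insert v Z' _ ih =>
      intro hsub
      have h1 := ih ((subset_insert v Z').trans hsub)
      have h2 : rk base e M A (insert v W) ≤ rk base e M A W := by
        have := hsub (mem_insert_self v Z')
        rw [hZ, mem_filter] at this
        exact this.2
      have h3 := rk_submod hs (W₁ := W ∪ Z') (W₂ := insert v W) hA hA (by omega)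
      rw [union_self, inter_self] at h3
      have h4 : W ∪ Z' ∪ insert v W = W ∪ insert v Z' := by
        ext; simp only [mem_union, mem_insert]; tauto
      have h5 : rk base e M A W ≤ rk base e M A ((W ∪ Z') ∩ insert v W) :=
        rk_mono Subset.rfl (subset_inter subset_union_left (subset_insert v W)) hA
      rw [h4] at h3
      omega
  have h1 := key Z Subset.rfl
  obtain ⟨H, _, h2, h3⟩ := exists_rk (base := base) (e := e) (W ∪ Z) hA
  have h4 := hs.card_le h2 h3
  have h5 : Z.card ≤ (H.biUnion base ∪ (W ∪ Z)).card :=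
    card_le_card (subset_union_right.trans subset_union_right)
  nlinarith

/-- Summing over the points of a `k`-tuple one at a time: each point either lies in the closure of
the previous ones, which happens for at most `C` points, or costs a factor `θ`. -/
lemma sum_pow_le [Fintype β] {g : Finset β → ℕ} {Q C : ℕ} {θ : ℝ} (hθ : 0 < θ) (hθ1 : θ ≤ 1)
    (hmono : ∀ W v, g W ≤ g (insert v W)) (hstep : ∀ W v, g (insert v W) ≤ g W + 1)
    (hcl : ∀ W, g W ≤ Q → (univ.filter fun v => g (insert v W) ≤ g W).card ≤ C)
    (k : ℕ) (W : Finset β) (hW : g W + k ≤ Q) :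
    ∑ z : Fin k → β, θ ^ g (W ∪ univ.image z) ≤
      (C + Fintype.card β * θ) ^ k * θ ^ g W := by
  induction k generalizing W with
  | zero => simp
  | succ k ih =>
    rw [← (Fin.consEquiv fun _ : Fin (k + 1) => β).sum_comp, Fintype.sum_prod_type]
    have h1 : ∀ (v : β) (z : Fin k → β),
        W ∪ univ.image (Fin.consEquiv (fun _ : Fin (k + 1) => β) (v, z)) =
          insert v W ∪ univ.image z := by
      intro v z
      ext x
      simp [Fin.consEquiv, Fin.exists_fin_succ, eq_comm]
      tauto
    simp only [h1]
    have h2 : ∀ v, θ ^ g (insert v W) ≤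
        (if g (insert v W) ≤ g W then θ ^ g W else 0) + θ * θ ^ g W := by
      intro v
      have h3 : 0 < θ ^ g W := by positivity
      split_ifs with h
      · have : θ ^ g (insert v W) ≤ θ ^ g W := pow_le_pow_of_le_one hθ.le hθ1 (hmono W v)
        nlinarith
      · rw [zero_add, ← pow_succ']
        exact pow_le_pow_of_le_one hθ.le hθ1 (by omega)
    calc ∑ v, ∑ z : Fin k → β, θ ^ g (insert v W ∪ univ.image z)
        ≤ ∑ v, (C + Fintype.card β * θ) ^ k * θ ^ g (insert v W) :=
          sum_le_sum fun v _ => ih (insert v W) (by have := hstep W v; omega)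
      _ ≤ ∑ v, (C + Fintype.card β * θ) ^ k *
            ((if g (insert v W) ≤ g W then θ ^ g W else 0) + θ * θ ^ g W) :=
          sum_le_sum fun v _ => by gcongr; exact h2 v
      _ = (C + Fintype.card β * θ) ^ k *
            (((univ.filter fun v => g (insert v W) ≤ g W).card : ℝ) * θ ^ g W +
              Fintype.card β * (θ * θ ^ g W)) := by
          rw [← mul_sum, sum_add_distrib, ← sum_filter, sum_const, sum_const, nsmul_eq_mul,
            nsmul_eq_mul, card_univ]
      _ ≤ (C + Fintype.card β * θ) ^ k * (C * θ ^ g W + Fintype.card β * (θ * θ ^ g W)) := by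
          have := hcl W (by omega)
          gcongr
      _ = _ := by ring

/-- All but a fraction `O(1 / |β|)` of the `(k + 1)`-tuples of points are generic over `W`. -/
lemma card_nongeneric_le [Fintype β] [Nonempty β] {g : Finset β → ℕ} {Q C : ℕ}
    (hmono : ∀ W v, g W ≤ g (insert v W)) (hstep : ∀ W v, g (insert v W) ≤ g W + 1)
    (hcl : ∀ W, g W ≤ Q → (univ.filter fun v => g (insert v W) ≤ g W).card ≤ C)
    (k : ℕ) (W : Finset β) (hW : g W + (k + 1) ≤ Q) :
    (univ.filter fun z : Fin (k + 1) → β => g (W ∪ univ.image z) < g W + (k + 1)).card ≤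
      (C + 1) ^ (k + 1) * Fintype.card β ^ k := by
  have hn : (0 : ℝ) < Fintype.card β := by exact_mod_cast Fintype.card_pos
  have hn1 : (1 : ℝ) ≤ Fintype.card β := by exact_mod_cast Fintype.card_pos
  -- Weighting by `θ = 1 / |β|` makes a nongeneric tuple `|β|` times heavier than a generic one.
  have h1 := sum_pow_le (θ := (Fintype.card β : ℝ)⁻¹) (by positivity) (inv_le_one_of_one_le₀ hn1)
    hmono hstep hcl (k + 1) W hW
  rw [mul_inv_cancel₀ hn.ne'] at h1
  set B := univ.filter fun z : Fin (k + 1) → β => g (W ∪ univ.image z) < g W + (k + 1) with hB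
  have h2 : (B.card : ℝ) * (Fintype.card β : ℝ)⁻¹ ^ (g W + k) ≤
      ∑ z : Fin (k + 1) → β, (Fintype.card β : ℝ)⁻¹ ^ g (W ∪ univ.image z) := by
    rw [← nsmul_eq_mul, ← sum_const]
    refine (sum_le_sum fun z hz => ?_).trans
      (sum_le_sum_of_subset_of_nonneg (subset_univ B) fun z _ _ => by positivity)
    rw [hB, mem_filter] at hz
    exact pow_le_pow_of_le_one (by positivity) (inv_le_one_of_one_le₀ hn1) (by omega)
  have h3 := h2.trans h1
  rw [pow_add, mul_comm ((Fintype.card β : ℝ)⁻¹ ^ g W), ← mul_assoc] at h3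
  have h4 := le_of_mul_le_mul_right h3 (by positivity)
  rw [inv_pow, ← div_eq_mul_inv, div_le_iff₀ (by positivity)] at h4
  exact_mod_cast h4

/-- Few hyperedges increase the rank of `(A, W)` by less than `k + 1`: the `k + 1` designated points
`co j` of such a hyperedge form a nongeneric tuple, and by sparsity at most `4 * (k + 1)` hyperedges
share the same tuple. -/
lemma card_dependent_le [DecidableEq α] [Fintype α] [Fintype β] [Nonempty β]
    (hs : LocallySparse base e M) {k C Q : ℕ} (co : α → Fin (k + 1) → β)
    (hco : ∀ j, univ.image (co j) ⊆ base j)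
    (hco' : ∀ j, (base j \ univ.image (co j)).card ≤ e)
    {A : Finset α} {W : Finset β} (hA : A.card + 1 ≤ M) (hQ : 8 * Q ≤ M)
    (hk : 4 * (k + 1) + 1 ≤ M)
    (hW : rk base e M A W + (k + 1) ≤ Q) (hC : (4 * e + 1) * Q ≤ C) :
    (univ.filter fun j => rk base e M (insert j A) W < rk base e M A W + (k + 1)).card ≤
      4 * (k + 1) * ((C + 1) ^ (k + 1) * Fintype.card β ^ k) := by
  have hgen := card_nongeneric_le (g := fun W => rk base e M A W) (Q := Q) (C := C)
    (fun W v => rk_mono Subset.rfl (subset_insert v W) (by omega))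
    (fun W v => rk_insert_right_le W v (by omega))
    (fun W hW => (card_closure_le hs (by omega) (by omega)).trans
      ((Nat.mul_le_mul_left _ hW).trans hC)) k W hW
  refine (card_le_mul_card_image_of_maps_to (f := co)
    (t := univ.filter fun z : Fin (k + 1) → β =>
      rk base e M A (W ∪ univ.image z) < rk base e M A W + (k + 1)) ?_ (4 * (k + 1)) ?_).trans
    (Nat.mul_le_mul_left _ hgen)
  · intro j hj
    rw [mem_filter] at hj ⊢
    refine ⟨mem_univ _, lt_of_le_of_lt ?_ hj.2⟩
    have hcard : (insert j A).card ≤ M := (card_insert_le j A).trans hA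
    refine (rk_mono (subset_insert j A) Subset.rfl hcard).trans
      (rk_of_subset_biUnion hcard (union_subset_union_right ?_))
    rw [biUnion_insert]
    exact (hco j).trans subset_union_left
  · intro z _
    -- The hyperedges through a fixed tuple `z` add at most `e` new points each.
    by_contra! hlt
    obtain ⟨J, hJ, hJc⟩ := exists_subset_card_eq (Nat.succ_le_of_lt hlt)
    have h1 := hs J (hJc.trans_le hk)
    have h2 : J.biUnion base ⊆ univ.image z ∪ J.biUnion fun j => base j \ univ.image (co j) := by
      intro x hx
      rw [mem_biUnion] at hx
      obtain ⟨j, hj, hx⟩ := hx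
      have hz : co j = z := (mem_filter.1 (hJ hj)).2
      by_cases h : x ∈ univ.image z
      · exact mem_union_left _ h
      · exact mem_union_right _ (mem_biUnion.2 ⟨j, hj, mem_sdiff.2 ⟨hx, by rwa [hz]⟩⟩)
    have h3 := (card_le_card h2).trans (card_union_le _ _)
    have h4 : (univ.image z).card ≤ k + 1 := by simpa using card_image_le (s := univ) (f := z)
    have h5 : (J.biUnion fun j => base j \ univ.image (co j)).card ≤ J.card * e :=
      card_biUnion_le_card_mul _ _ _ fun j _ => hco' j
    nlinarith

end Rank

/-! ### Random assignments of tuples -/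

/-- First-moment method: if the probabilities that a uniformly random `φ` maps `H i` into `X i` sum
to less than `1`, some `φ` does this for no `i`. -/
lemma exists_escaping {α Ω I : Type*} [Fintype α] [DecidableEq α] [Fintype Ω] [DecidableEq Ω]
    [Nonempty Ω] (idx : Finset I) (H : I → Finset α) (X : I → Finset Ω)
    (h : ∑ i ∈ idx, ((X i).card / Fintype.card Ω : ℝ) ^ (H i).card < 1) :
    ∃ φ : α → Ω, ∀ i ∈ idx, ∃ j ∈ H i, φ j ∉ X i := by
  by_contra! hcon
  have hΩ : (0 : ℝ) < Fintype.card Ω := by exact_mod_cast Fintype.card_pos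
  set bad : I → Finset (α → Ω) := fun i =>
    Fintype.piFinset fun j => if j ∈ H i then X i else univ with hbad
  have hcard : ∀ i, ((bad i).card : ℝ) =
      ((X i).card / Fintype.card Ω : ℝ) ^ (H i).card * (Fintype.card Ω : ℝ) ^ Fintype.card α := by
    intro i
    have h1 : (bad i).card =
        (X i).card ^ (H i).card * Fintype.card Ω ^ (Fintype.card α - (H i).card) := by
      rw [hbad, Fintype.card_piFinset]
      simp only [apply_ite card]
      rw [prod_ite, prod_const, prod_const, filter_mem_eq_inter, univ_inter, card_univ]
      congr 2
      rw [← card_compl]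
      congr 1
      ext; simp
    have h2 : (Fintype.card Ω : ℝ) ^ Fintype.card α = (Fintype.card Ω : ℝ) ^ (H i).card *
        (Fintype.card Ω : ℝ) ^ (Fintype.card α - (H i).card) := by
      rw [← pow_add, Nat.add_sub_cancel' (card_le_univ _)]
    rw [h1, h2, div_pow]
    push_cast
    field_simp
  have hall : (univ : Finset (α → Ω)) ⊆ idx.biUnion bad := by
    intro φ _
    obtain ⟨i, hi, h2⟩ := hcon φ
    rw [mem_biUnion]
    refine ⟨i, hi, Fintype.mem_piFinset.2 fun j => ?_⟩
    split_ifs with hj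
    · exact h2 j hj
    · exact mem_univ _
  have h3 := (card_le_card hall).trans card_biUnion_le
  rw [card_univ, Fintype.card_fun] at h3
  have h4 : (Fintype.card Ω : ℝ) ^ Fintype.card α ≤ ∑ i ∈ idx, ((bad i).card : ℝ) := by
    exact_mod_cast h3
  simp only [hcard] at h4
  rw [← sum_mul] at h4
  have : (0 : ℝ) < (Fintype.card Ω : ℝ) ^ Fintype.card α := by positivity
  nlinarith

/-- The points occurring in one of the `d` tuples assigned to `j`. -/
def basePts {α : Type*} {d s n : ℕ} (φ : α → Fin d → Fin s → Fin n) (j : α) : Finset (Fin n) :=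
  univ.image fun x : Fin d × Fin s => φ j x.1 x.2

/-- A bound for the expected number of pairs of `k` left vertices and `w < (e + 1 / 4) * k` points
such that all base points of the former are among the latter. -/
lemma sparse_term_le {q τ e D M W₀ k w : ℕ} (hq : 1 ≤ q) (hD : D = e + (τ + 1)) (hk : k ≤ M)
    (hw : w ≤ W₀) (hkw : 4 * w < (4 * e + 1) * k) :
    ((q ^ (2 * τ + 1)).choose k : ℝ) * ((q ^ 2).choose w : ℝ) *
      ((w : ℝ) ^ D / ((q ^ 2 : ℕ) : ℝ) ^ D) ^ k ≤ ((W₀ : ℝ) + 1) ^ (D * M) / q := by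
  have hq0 : (0 : ℝ) < q := by exact_mod_cast hq
  have hq1 : (1 : ℝ) ≤ q := by exact_mod_cast hq
  have h1 : ((q ^ (2 * τ + 1)).choose k : ℝ) ≤ (q : ℝ) ^ ((2 * τ + 1) * k) := by
    rw [pow_mul]; exact_mod_cast Nat.choose_le_pow _ k
  have h2 : ((q ^ 2).choose w : ℝ) ≤ (q : ℝ) ^ (2 * w) := by
    rw [pow_mul]; exact_mod_cast Nat.choose_le_pow _ w
  have h3 : (w : ℝ) ^ (D * k) ≤ ((W₀ : ℝ) + 1) ^ (D * M) := by
    have hw' : (w : ℝ) ≤ W₀ + 1 := by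
      have : (w : ℝ) ≤ W₀ := by exact_mod_cast hw
      linarith
    calc (w : ℝ) ^ (D * k) ≤ ((W₀ : ℝ) + 1) ^ (D * k) := by gcongr
      _ ≤ _ := by
        gcongr
        linarith [(Nat.cast_nonneg W₀ : (0 : ℝ) ≤ W₀)]
  have h4 : (q : ℝ) ^ ((2 * τ + 1) * k) * (q : ℝ) ^ (2 * w) * q ≤ (q : ℝ) ^ (2 * (D * k)) := by
    rw [← pow_add, ← pow_succ]
    refine pow_le_pow_right₀ hq1 ?_
    subst hD
    have : 1 ≤ k := by
      by_contra! h
      have : k = 0 := by omega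
      subst this
      simp at hkw
    nlinarith
  rw [div_pow, ← pow_mul, ← pow_mul, Nat.cast_pow, ← pow_mul, ← mul_div_assoc,
    div_le_div_iff₀ (by positivity) hq0]
  calc ((q ^ (2 * τ + 1)).choose k : ℝ) * ((q ^ 2).choose w : ℝ) * (w : ℝ) ^ (D * k) * q
      ≤ (q : ℝ) ^ ((2 * τ + 1) * k) * (q : ℝ) ^ (2 * w) * ((W₀ : ℝ) + 1) ^ (D * M) * q := by
        gcongr
    _ = ((W₀ : ℝ) + 1) ^ (D * M) *
        ((q : ℝ) ^ ((2 * τ + 1) * k) * (q : ℝ) ^ (2 * w) * q) := by ring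
    _ ≤ _ := by gcongr

/-- A bound for the expected number of pairs of `p` left vertices and `q ^ (2 * σ + 1)` right
vertices such that all neighbors of the former are among the latter. -/
lemma cover_term_le {q τ σ d p : ℕ} (hq : 1 ≤ q) (hd : d = 2 * τ + 1 + 2 * (σ + 1) + 1)
    (hp : q ^ (2 * σ + 1) ≤ p) :
    ((q ^ (2 * τ + 1)).choose p : ℝ) * (((q ^ 2) ^ (σ + 1)).choose (q ^ (2 * σ + 1)) : ℝ) *
      (((q ^ (2 * σ + 1) : ℕ) : ℝ) ^ d / (((q ^ 2) ^ (σ + 1) : ℕ) : ℝ) ^ d) ^ p ≤ 1 / q := by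
  have hq0 : (0 : ℝ) < q := by exact_mod_cast hq
  have hq1 : (1 : ℝ) ≤ q := by exact_mod_cast hq
  have h1 : ((q ^ (2 * τ + 1)).choose p : ℝ) ≤ (q : ℝ) ^ ((2 * τ + 1) * p) := by
    rw [pow_mul]; exact_mod_cast Nat.choose_le_pow _ p
  have h2 : (((q ^ 2) ^ (σ + 1)).choose (q ^ (2 * σ + 1)) : ℝ) ≤
      (q : ℝ) ^ (2 * (σ + 1) * p) := by
    calc (((q ^ 2) ^ (σ + 1)).choose (q ^ (2 * σ + 1)) : ℝ)
        ≤ ((q : ℝ) ^ (2 * (σ + 1))) ^ (q ^ (2 * σ + 1)) := by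
          rw [pow_mul]; exact_mod_cast Nat.choose_le_pow _ _
      _ ≤ ((q : ℝ) ^ (2 * (σ + 1))) ^ p := by
          gcongr
          exact one_le_pow₀ hq1
      _ = _ := by rw [← pow_mul]
  have hp1 : 1 ≤ p := le_trans (Nat.one_le_pow _ _ hq) hp
  have h3 : ((q ^ (2 * σ + 1) : ℕ) : ℝ) ^ d / (((q ^ 2) ^ (σ + 1) : ℕ) : ℝ) ^ d =
      1 / (q : ℝ) ^ d := by
    rw [← div_pow, ← one_div_pow]
    congr 1
    push_cast
    rw [← pow_mul, show 2 * (σ + 1) = 2 * σ + 1 + 1 by ring, pow_succ (q : ℝ) (2 * σ + 1)]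
    field_simp
  rw [h3, one_div_pow, ← pow_mul (q : ℝ) d p, mul_one_div,
    div_le_div_iff₀ (by positivity) hq0, one_mul]
  calc ((q ^ (2 * τ + 1)).choose p : ℝ) * (((q ^ 2) ^ (σ + 1)).choose (q ^ (2 * σ + 1)) : ℝ) * q
      ≤ (q : ℝ) ^ ((2 * τ + 1) * p) * (q : ℝ) ^ (2 * (σ + 1) * p) * q := by gcongr
    _ = (q : ℝ) ^ ((2 * τ + 1) * p + 2 * (σ + 1) * p + 1) := by rw [← pow_add, ← pow_succ]
    _ ≤ (q : ℝ) ^ (d * p) := by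
        refine pow_le_pow_right₀ hq1 ?_
        subst hd
        nlinarith

/-- For `q` large, some assignment of `d` tuples of points to every left vertex is locally sparse,
and any `p` left vertices have at least `q ^ (2 * σ + 1)` neighbors. -/
theorem exists_hypergraph {q τ σ d e M p : ℕ} (hq4 : 4 ≤ q)
    (hd : d = 2 * τ + 1 + 2 * (σ + 1) + 1) (he : d * (σ + 1) = e + (τ + 1))
    (hqM : 4 * ((M + 1) * ((e + 1) * M + 1)) * ((e + 1) * M + 1) ^ (d * (σ + 1) * M) ≤ q)
    (hp : q ^ (2 * σ + 1) ≤ p) :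
    ∃ φ : Fin (q ^ (2 * τ + 1)) → Fin d → Fin (σ + 1) → Fin (q ^ 2),
      LocallySparse (basePts φ) e M ∧
      ∀ U : Finset (Fin (q ^ (2 * τ + 1))), U.card = p →
        q ^ (2 * σ + 1) ≤ (U.biUnion fun j => univ.image (φ j)).card := by
  have hq0 : (0 : ℝ) < q := by exact_mod_cast (show 0 < q by omega)
  have hq4' : (4 : ℝ) ≤ q := by exact_mod_cast hq4
  have : Nonempty (Fin (q ^ 2)) := ⟨⟨0, by positivity⟩⟩
  set W₀ := (e + 1) * M with hW₀
  set kw := ((range (M + 1)) ×ˢ (range (W₀ + 1))).filter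
    fun x : ℕ × ℕ => 4 * x.2 < (4 * e + 1) * x.1 with hkw
  set idx₁ := kw.sigma fun x => powersetCard x.1 (univ : Finset (Fin (q ^ (2 * τ + 1)))) ×ˢ
    powersetCard x.2 (univ : Finset (Fin (q ^ 2))) with hidx₁
  set idx₂ := powersetCard p (univ : Finset (Fin (q ^ (2 * τ + 1)))) ×ˢ
    powersetCard (q ^ (2 * σ + 1)) (univ : Finset (Fin (σ + 1) → Fin (q ^ 2))) with hidx₂
  -- The left summand indexes the violations of sparsity, the right one those of expansion.
  let H : ((_ : ℕ × ℕ) × (Finset (Fin (q ^ (2 * τ + 1))) × Finset (Fin (q ^ 2)))) ⊕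
      (Finset (Fin (q ^ (2 * τ + 1))) × Finset (Fin (σ + 1) → Fin (q ^ 2))) →
      Finset (Fin (q ^ (2 * τ + 1))) := Sum.elim (fun x => x.2.1) fun x => x.1
  let X : ((_ : ℕ × ℕ) × (Finset (Fin (q ^ (2 * τ + 1))) × Finset (Fin (q ^ 2)))) ⊕
      (Finset (Fin (q ^ (2 * τ + 1))) × Finset (Fin (σ + 1) → Fin (q ^ 2))) →
      Finset (Fin d → Fin (σ + 1) → Fin (q ^ 2)) :=
    Sum.elim (fun x => Fintype.piFinset fun _ => Fintype.piFinset fun _ => x.2.2)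
      fun x => Fintype.piFinset fun _ => x.2
  have hsum₁ : ∑ x ∈ idx₁, ((X (Sum.inl x)).card /
      Fintype.card (Fin d → Fin (σ + 1) → Fin (q ^ 2)) : ℝ) ^ (H (Sum.inl x)).card ≤ 1 / 4 := by
    rw [hidx₁, sum_sigma]
    have h1 : ∀ x ∈ kw, ∑ y ∈ powersetCard x.1 (univ : Finset (Fin (q ^ (2 * τ + 1)))) ×ˢ
        powersetCard x.2 (univ : Finset (Fin (q ^ 2))),
        ((X (Sum.inl ⟨x, y⟩)).card / Fintype.card (Fin d → Fin (σ + 1) → Fin (q ^ 2)) : ℝ) ^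
          (H (Sum.inl ⟨x, y⟩)).card ≤ ((W₀ : ℝ) + 1) ^ (d * (σ + 1) * M) / q := by
      intro x hx
      rw [hkw, mem_filter, mem_product, mem_range, mem_range] at hx
      have h2 : ∀ y ∈ powersetCard x.1 (univ : Finset (Fin (q ^ (2 * τ + 1)))) ×ˢ
          powersetCard x.2 (univ : Finset (Fin (q ^ 2))),
          ((X (Sum.inl ⟨x, y⟩)).card / Fintype.card (Fin d → Fin (σ + 1) → Fin (q ^ 2)) : ℝ) ^
          (H (Sum.inl ⟨x, y⟩)).card = ((x.2 : ℝ) ^ (d * (σ + 1)) /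
            ((q ^ 2 : ℕ) : ℝ) ^ (d * (σ + 1))) ^ x.1 := by
        intro y hy
        rw [mem_product, mem_powersetCard, mem_powersetCard] at hy
        simp only [X, H, Sum.elim_inl, hy.1.2, Fintype.card_piFinset, prod_const, card_univ,
          Fintype.card_fin, Fintype.card_fun, hy.2.2]
        rw [mul_comm d, pow_mul, pow_mul]
        push_cast
        rfl
      rw [sum_congr rfl h2, sum_const, card_product, card_powersetCard, card_powersetCard,
        card_univ, card_univ, Fintype.card_fin, Fintype.card_fin, nsmul_eq_mul]
      push_cast only [Nat.cast_mul]
      exact sparse_term_le (by omega) he (by omega) (by omega) hx.2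
    refine (sum_le_sum h1).trans ?_
    rw [sum_const, nsmul_eq_mul, ← mul_div_assoc, div_le_div_iff₀ hq0 (by norm_num)]
    have h3 : (kw.card : ℝ) ≤ ((M + 1) * (W₀ + 1) : ℕ) := by
      have : kw.card ≤ _ := card_filter_le _ _
      rw [card_product, card_range, card_range] at this
      exact_mod_cast this
    have h4 : (4 * ((M + 1) * (W₀ + 1) : ℕ) : ℝ) * ((W₀ : ℝ) + 1) ^ (d * (σ + 1) * M) ≤ q := by
      exact_mod_cast hqM
    have h5 : (0 : ℝ) ≤ ((W₀ : ℝ) + 1) ^ (d * (σ + 1) * M) := by positivity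
    nlinarith
  have hsum₂ : ∑ x ∈ idx₂, ((X (Sum.inr x)).card /
      Fintype.card (Fin d → Fin (σ + 1) → Fin (q ^ 2)) : ℝ) ^ (H (Sum.inr x)).card ≤ 1 / 4 := by
    have h2 : ∀ x ∈ idx₂, ((X (Sum.inr x)).card /
        Fintype.card (Fin d → Fin (σ + 1) → Fin (q ^ 2)) : ℝ) ^ (H (Sum.inr x)).card =
        (((q ^ (2 * σ + 1) : ℕ) : ℝ) ^ d / (((q ^ 2) ^ (σ + 1) : ℕ) : ℝ) ^ d) ^ p := by
      intro x hx
      rw [hidx₂, mem_product, mem_powersetCard, mem_powersetCard] at hx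
      simp only [X, H, Sum.elim_inr, hx.1.2, Fintype.card_piFinset, prod_const, card_univ,
        Fintype.card_fin, Fintype.card_fun, hx.2.2]
      push_cast
      rfl
    rw [sum_congr rfl h2, sum_const, hidx₂, card_product, card_powersetCard, card_powersetCard,
      card_univ, card_univ, Fintype.card_fin, Fintype.card_fun, Fintype.card_fin,
      Fintype.card_fin, nsmul_eq_mul]
    push_cast only [Nat.cast_mul]
    refine (cover_term_le (by omega) hd hp).trans ?_
    exact one_div_le_one_div_of_le (by norm_num) hq4'
  obtain ⟨φ, hφ⟩ := exists_escaping (idx₁.disjSum idx₂) H X (by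
    rw [sum_disjSum]; linarith)
  refine ⟨φ, fun H' hH' => ?_, fun U hU => ?_⟩
  · by_contra! hlt
    have hmem : (⟨(H'.card, (H'.biUnion (basePts φ)).card), (H', H'.biUnion (basePts φ))⟩ :
        (_ : ℕ × ℕ) × (Finset (Fin (q ^ (2 * τ + 1))) × Finset (Fin (q ^ 2)))) ∈ idx₁ := by
      rw [hidx₁, mem_sigma, hkw, mem_filter, mem_product, mem_range, mem_range, mem_product,
        mem_powersetCard, mem_powersetCard]
      refine ⟨⟨⟨by simpa using Nat.lt_succ_of_le hH', ?_⟩, hlt⟩, ⟨subset_univ _, rfl⟩,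
        ⟨subset_univ _, rfl⟩⟩
      have : (e + 1) * H'.card ≤ W₀ := Nat.mul_le_mul_left _ hH'
      show (H'.biUnion (basePts φ)).card < W₀ + 1
      nlinarith
    obtain ⟨j, hj, hj'⟩ := hφ _ (inl_mem_disjSum.2 hmem)
    refine hj' ?_
    simp only [X, Sum.elim_inl, Fintype.mem_piFinset]
    intro c l
    exact mem_biUnion.2 ⟨j, hj, mem_image.2 ⟨(c, l), mem_univ _, rfl⟩⟩
  · by_contra! hlt
    obtain ⟨Y, hY1, hY2⟩ := exists_superset_card_eq hlt.le (by
      rw [Fintype.card_fun, Fintype.card_fin, Fintype.card_fin, ← pow_mul]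
      exact Nat.pow_le_pow_right (by omega) (by omega))
    have hmem : (U, Y) ∈ idx₂ := by
      rw [hidx₂, mem_product, mem_powersetCard, mem_powersetCard]
      exact ⟨⟨subset_univ _, hU⟩, ⟨subset_univ _, hY2⟩⟩
    obtain ⟨j, hj, hj'⟩ := hφ _ (inr_mem_disjSum.2 hmem)
    refine hj' ?_
    simp only [X, Sum.elim_inr, Fintype.mem_piFinset]
    intro c
    exact hY1 (mem_biUnion.2 ⟨j, hj, mem_image.2 ⟨c, mem_univ _, rfl⟩⟩)

/-! ### The Sherali–Adams solution -/

/-- The rank of a set of left and right vertices, where a left vertex `j` is the hyperedge `base j`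
and a right vertex `i` stands for its set of points `tup i`. -/
noncomputable def graphRank {α β ι : Type*} [DecidableEq α] [DecidableEq β] [DecidableEq ι]
    (base : α → Finset β) (tup : ι → Finset β) (e M : ℕ) (S : Finset (α ⊕ ι)) : ℕ :=
  rk base e M S.toLeft (S.toRight.biUnion tup)

section GraphRank

variable {α β ι : Type*} [DecidableEq α] [DecidableEq β] [DecidableEq ι]
  {base : α → Finset β} {tup : ι → Finset β} {e M s t r : ℕ}

lemma graphRank_le (hb : ∀ j, (base j).card ≤ e + t) (ht : ∀ i, (tup i).card ≤ s)
    {S : Finset (α ⊕ ι)} {R : ℕ} (hS : S.card ≤ R) (hM : R ≤ M) :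
    graphRank base tup e M S ≤ (s + t) * R := by
  have h1 := card_toLeft_add_card_toRight (u := S)
  have h2 := rk_le_card (M := M) hb (A := S.toLeft) (S.toRight.biUnion tup) (by omega)
  have h3 : (S.toRight.biUnion tup).card ≤ S.toRight.card * s :=
    card_biUnion_le_card_mul _ _ _ fun i _ => ht i
  unfold graphRank
  have h4 : S.toLeft.card ≤ R := by omega
  have h5 : S.toRight.card ≤ R := by omega
  nlinarith [Nat.mul_le_mul_left t h4, Nat.mul_le_mul_left s h5]

lemma graphRank_mono {S S' : Finset (α ⊕ ι)} (h : S ⊆ S') (hM : S'.card ≤ M) :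
    graphRank base tup e M S ≤ graphRank base tup e M S' :=
  rk_mono (toLeft_subset_toLeft h) (biUnion_subset_biUnion_of_subset_left _
    (toRight_subset_toRight h)) (card_toLeft_le.trans hM)

lemma isLocalRank_graphRank (hs : LocallySparse base e M) (hb : ∀ j, (base j).card ≤ e + t)
    (ht : ∀ i, (tup i).card ≤ s) {R : ℕ} (hR : R ≤ M) (hM : 8 * ((s + t) * R) ≤ M) :
    IsLocalRank (graphRank base tup e M) R where
  empty := by
    have := graphRank_le hb ht (S := (∅ : Finset (α ⊕ ι))) (R := 0) (by simp) (Nat.zero_le M)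
    simpa using this
  mono S S' h hS' := graphRank_mono h (hS'.trans hR)
  submod S U x hc := by
    have hc1 : (S ∪ U).card ≤ R := (card_le_card (subset_insert x _)).trans hc
    have hc2 : (insert x S).card ≤ R :=
      (card_le_card (insert_subset_insert x subset_union_left)).trans hc
    have h1 := graphRank_le hb ht hc1 hR
    have h2 := graphRank_le hb ht hc2 hR
    have h3 : insert x (S ∪ U) = (S ∪ U) ∪ insert x S := by
      ext; simp only [mem_union, mem_insert]; tauto
    have h4 := rk_submod hs (A₁ := (S ∪ U).toLeft) (A₂ := (insert x S).toLeft)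
      (W₁ := (S ∪ U).toRight.biUnion tup) (W₂ := (insert x S).toRight.biUnion tup)
      (card_toLeft_le.trans (hc1.trans hR)) (card_toLeft_le.trans (hc2.trans hR))
      (by unfold graphRank at h1 h2; omega)
    have h5 : graphRank base tup e M (insert x (S ∪ U)) =
        rk base e M ((S ∪ U).toLeft ∪ (insert x S).toLeft)
          ((S ∪ U).toRight.biUnion tup ∪ (insert x S).toRight.biUnion tup) := by
      rw [graphRank, h3, toLeft_union, toRight_union, union_biUnion]
    have h6 : graphRank base tup e M S ≤
        rk base e M ((S ∪ U).toLeft ∩ (insert x S).toLeft)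
          ((S ∪ U).toRight.biUnion tup ∩ (insert x S).toRight.biUnion tup) := by
      refine rk_mono (subset_inter (toLeft_subset_toLeft subset_union_left)
        (toLeft_subset_toLeft (subset_insert x S))) (subset_inter
        (biUnion_subset_biUnion_of_subset_left _ (toRight_subset_toRight subset_union_left))
        (biUnion_subset_biUnion_of_subset_left _ (toRight_subset_toRight (subset_insert x S)))) ?_
      exact (card_le_card inter_subset_left).trans (card_toLeft_le.trans (hc1.trans hR))
    unfold graphRank at h5 h6 ⊢
    omega

lemma graphRank_insert_inl (S : Finset (α ⊕ ι)) (j : α) :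
    graphRank base tup e M (insert (Sum.inl j) S) =
      rk base e M (insert j S.toLeft) (S.toRight.biUnion tup) := by
  rw [graphRank, toLeft_insert_inl, toRight_insert_inl]

lemma graphRank_insert_inr (S : Finset (α ⊕ ι)) (i : ι) :
    graphRank base tup e M (insert (Sum.inr i) S) =
      rk base e M S.toLeft (S.toRight.biUnion tup ∪ tup i) := by
  rw [graphRank, toLeft_insert_inr, toRight_insert_inr, biUnion_insert, union_comm]

end GraphRank

lemma card_basePts_le {α : Type*} {d s n m : ℕ} (φ : α → Fin d → Fin s → Fin n)
    (h : d * s = m) (j : α) : (basePts φ j).card ≤ m := by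
  refine card_image_le.trans ?_
  simp [h]

/-- Each left vertex has a designated `t`-tuple of base points, outside of which it has at most `e`
base points. -/
lemma exists_coords {α : Type*} {d s n e t : ℕ} (φ : α → Fin d → Fin s → Fin n)
    (h : d * s = e + t) : ∃ co : α → Fin t → Fin n, (∀ j, univ.image (co j) ⊆ basePts φ j) ∧
      ∀ j, (basePts φ j \ univ.image (co j)).card ≤ e := by
  obtain ⟨f⟩ : Nonempty (Fin t ↪ Fin d × Fin s) :=
    Function.Embedding.nonempty_of_card_le (by simp [h])
  refine ⟨fun j c => φ j (f c).1 (f c).2, fun j => ?_, fun j => ?_⟩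
  · intro x hx
    obtain ⟨c, _, rfl⟩ := mem_image.1 hx
    exact mem_image.2 ⟨f c, mem_univ _, rfl⟩
  · have h1 : basePts φ j \ univ.image (fun c => φ j (f c).1 (f c).2) ⊆
        (univ.map f)ᶜ.image fun x => φ j x.1 x.2 := by
      intro x hx
      rw [mem_sdiff] at hx
      obtain ⟨y, _, rfl⟩ := mem_image.1 hx.1
      refine mem_image.2 ⟨y, ?_, rfl⟩
      rw [mem_compl]
      intro hy
      obtain ⟨c, _, rfl⟩ := mem_map.1 hy
      exact hx.2 (mem_image.2 ⟨c, mem_univ _, rfl⟩)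
    refine (card_le_card h1).trans (card_image_le.trans ?_)
    rw [card_compl, card_map, card_univ]
    simp [h]

/-- The Sherali–Adams solution for a locally sparse assignment `φ`, with `t = k + 1`. Ranks that
occur are at most `Q`, closures have at most `C` points, and `M` is the truncation bound of the
rank. -/
theorem exists_sheraliAdams {α ι : Type*} [Fintype α] [Fintype ι] [DecidableEq α]
    [DecidableEq ι] {n s k d e M Q C r : ℕ} {θ p : ℝ} [Nonempty (Fin n)]
    (φ : α → Fin d → Fin s → Fin n) (enc : ι ≃ (Fin s → Fin n))
    (hs : LocallySparse (basePts φ) e M) (he : d * s = e + (k + 1))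
    (hQ : Q = (s + (k + 1)) * (r + 3)) (hM : M = 8 * Q + 1) (hC : C = (4 * e + 1) * Q)
    (hθ : 0 < θ) (hθr : θ * 2 ^ (r + 2) ≤ 1 / 2) (hCθ : (C : ℝ) ≤ n * θ)
    (hqC : 2 * (r * (4 * (k + 1) * ((C + 1) ^ (k + 1) * n ^ k))) ≤ Fintype.card α)
    (hp0 : 0 ≤ p) (hp : p ≤ Fintype.card α / 4 * θ ^ (k + 1)) (E : Finset (α × ι))
    (hE : ∀ ji ∈ E, ∃ c, φ ji.1 c = enc ji.2) :
    ∃ y : Finset (α ⊕ ι) → ℝ,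
        y ∅ = 1 ∧
        ∀ S T : Finset (α ⊕ ι), Disjoint S T → S.card + T.card ≤ r →
          ((∑ i : ι, ∑ J ∈ T.powerset, (-1 : ℝ) ^ J.card * y (S ∪ J ∪ {Sum.inr i})) ≤
              (2 * (2 * (n * θ)) ^ s) * ∑ J ∈ T.powerset, (-1 : ℝ) ^ J.card * y (S ∪ J)) ∧
          (p * (∑ J ∈ T.powerset, (-1 : ℝ) ^ J.card * y (S ∪ J)) ≤
              ∑ j : α, ∑ J ∈ T.powerset, (-1 : ℝ) ^ J.card * y (S ∪ J ∪ {Sum.inl j})) ∧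
          (∀ ji ∈ E,
            ∑ J ∈ T.powerset, (-1 : ℝ) ^ J.card * y (S ∪ J ∪ {Sum.inl ji.1}) ≤
              ∑ J ∈ T.powerset, (-1 : ℝ) ^ J.card * y (S ∪ J ∪ {Sum.inr ji.2})) ∧
          (0 ≤ ∑ J ∈ T.powerset, (-1 : ℝ) ^ J.card * y (S ∪ J)) ∧
          (∑ J ∈ T.powerset, (-1 : ℝ) ^ J.card * y (S ∪ J) ≤ 1) := by
  have hb := card_basePts_le φ he
  obtain ⟨tup, htup⟩ : ∃ tup : ι → Finset (Fin n), ∀ i, tup i = univ.image (enc i) :=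
    ⟨_, fun _ => rfl⟩
  have ht : ∀ i, (tup i).card ≤ s := fun i => by
    rw [htup]; exact card_image_le.trans (by simp)
  have hQr : (k + 1) * (r + 3) ≤ Q := by rw [hQ]; exact Nat.mul_le_mul_right _ (by omega)
  have hQr' : r + 3 ≤ Q := (Nat.le_mul_of_pos_left _ (Nat.succ_pos k)).trans hQr
  have hQk : k + 1 ≤ Q := (Nat.le_mul_of_pos_right _ (Nat.succ_pos _)).trans hQr
  have hQt : Q = (s + (k + 1)) * (r + 2) + s + (k + 1) := by rw [hQ]; ring
  have hθ1 : θ ≤ 1 := by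
    have : (1 : ℝ) ≤ 2 ^ (r + 2) := one_le_pow₀ (by norm_num)
    nlinarith
  have hrk : ∀ S : Finset (α ⊕ ι), S.card ≤ r + 2 →
      rk (basePts φ) e M S.toLeft (S.toRight.biUnion tup) ≤ (s + (k + 1)) * (r + 2) :=
    fun S hS => graphRank_le (M := M) hb ht hS (by omega)
  refine sheraliAdams_of_localRank (t := k + 1) E
    (isLocalRank_graphRank (M := M) hs hb ht (by omega) (by omega)) hθ hθr ?_ ?_
    (by positivity) hp0 hp ?_ ?_
  · intro ji hji S hS
    obtain ⟨c, hc⟩ := hE ji hji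
    have h0 : (insert (Sum.inl ji.1) S).toLeft.card ≤ M :=
      card_toLeft_le.trans ((card_insert_le _ _).trans (by omega))
    rw [graphRank_insert_inr]
    refine le_antisymm (rk_of_subset_biUnion h0 (union_subset_union_right ?_))
      (rk_mono Subset.rfl subset_union_left h0)
    rw [toLeft_insert_inl, biUnion_insert, htup]
    refine Subset.trans ?_ subset_union_left
    intro x hx
    obtain ⟨l, _, rfl⟩ := mem_image.1 hx
    exact mem_image.2 ⟨(c, l), mem_univ _, by rw [hc]⟩
  · intro S hS
    have hA : S.toLeft.card ≤ M := card_toLeft_le.trans (by omega)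
    have h1 := sum_pow_le (g := fun W => rk (basePts φ) e M S.toLeft W) (Q := Q) (C := C) hθ hθ1
      (fun W v => rk_mono Subset.rfl (subset_insert v W) hA)
      (fun W v => rk_insert_right_le W v hA)
      (fun W hW => (card_closure_le hs hA (by omega)).trans
        ((Nat.mul_le_mul_left _ hW).trans hC.ge)) s (S.toRight.biUnion tup)
      (by have := hrk S (by omega); omega)
    rw [← enc.sum_comp] at h1
    simp only [graphRank_insert_inr, htup] at h1 ⊢
    refine h1.trans ?_
    have h2 : (C + Fintype.card (Fin n) * θ) ^ s ≤ 2 * (2 * (n * θ)) ^ s / 2 := by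
      rw [mul_div_cancel_left₀ _ (two_ne_zero), Fintype.card_fin]
      gcongr
      linarith
    exact mul_le_mul_of_nonneg_right h2 (by positivity)
  · intro S j hS
    rw [graphRank_insert_inl]
    refine rk_insert_left_le hs hb (card_toLeft_le.trans (by omega)) ?_ j
    have := hrk S (by omega)
    omega
  · intro S T hST
    obtain ⟨co, hco, hco'⟩ := exists_coords φ he
    set good := univ.filter fun j => ∀ x ∈ T,
      graphRank (basePts φ) tup e M (insert x S) + (k + 1) ≤
        graphRank (basePts φ) tup e M (insert (Sum.inl j) (insert x S)) with hgood
    set bad := fun x => univ.filter fun j =>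
      rk (basePts φ) e M (insert j (insert x S).toLeft) ((insert x S).toRight.biUnion tup) <
        rk (basePts φ) e M (insert x S).toLeft ((insert x S).toRight.biUnion tup) + (k + 1)
      with hbad
    have h1 : ∀ x ∈ T, (bad x).card ≤ 4 * (k + 1) * ((C + 1) ^ (k + 1) * n ^ k) := by
      intro x hx
      have hT := card_pos.2 ⟨x, hx⟩
      have hc : (insert x S).card ≤ r + 2 := (card_insert_le x S).trans (by omega)
      have h2 := card_dependent_le hs (C := C) (Q := Q) co hco hco'
        (A := (insert x S).toLeft) (W := (insert x S).toRight.biUnion tup)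
        (by have := card_toLeft_le (u := insert x S); omega) (by omega) (by omega)
        (by have := hrk (insert x S) hc; omega) hC.ge
      rwa [Fintype.card_fin] at h2
    have h2 : goodᶜ ⊆ T.biUnion bad := by
      intro j hj
      simp only [hgood, mem_compl, mem_filter, mem_univ, true_and, not_forall, not_le] at hj
      obtain ⟨x, hx, hj⟩ := hj
      rw [graphRank_insert_inl] at hj
      exact mem_biUnion.2 ⟨x, hx, mem_filter.2 ⟨mem_univ _, hj⟩⟩
    have h3 := (card_le_card h2).trans (card_biUnion_le_card_mul _ _ _ h1)
    have h4 := card_add_card_compl good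
    have h5 : 2 * (T.card * (4 * (k + 1) * ((C + 1) ^ (k + 1) * n ^ k))) ≤
        2 * (r * (4 * (k + 1) * ((C + 1) ^ (k + 1) * n ^ k))) := by
      gcongr; omega
    have h6 : Fintype.card α ≤ 2 * good.card := by omega
    have h7 : (Fintype.card α : ℝ) ≤ 2 * good.card := by exact_mod_cast h6
    linarith

/-! ### Choice of the parameters -/

lemma card_nbrs {a b d : ℕ} {Ω : Type*} [DecidableEq Ω] (f : Fin a → Fin d → Ω)
    (enc : Fin b ≃ Ω) (U : Finset (Fin a)) :
    (nbrs (univ.filter fun ji : Fin a × Fin b => ∃ c, f ji.1 c = enc ji.2) U).card =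
      (U.biUnion fun j => univ.image (f j)).card := by
  rw [← card_map enc.toEmbedding]
  congr 1
  ext z
  simp only [nbrs, mem_map, mem_filter, mem_univ, true_and, mem_biUnion, mem_image,
    Equiv.coe_toEmbedding]
  constructor
  · rintro ⟨i, ⟨j, hj, c, hc⟩, rfl⟩
    exact ⟨j, hj, c, hc⟩
  · rintro ⟨j, hj, c, rfl⟩
    exact ⟨enc.symm (f j c), ⟨j, hj, c, by simp⟩, by simp⟩

/-- Choice of `t = τ + 1` and `s = σ + 1 = ⌊γ * t⌋`, with `t` so large that the rounding errors,
which amount to a factor `q ^ O(1)`, are absorbed by `N ^ η = q ^ ((2 * τ + 1) * η)`. -/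
lemma exists_exponents {γ η : ℝ} (hγ0 : 0 < γ) (hη : 0 < η) :
    ∃ τ σ : ℕ, (σ : ℝ) + 1 ≤ γ * (τ + 1) ∧ γ * (τ + 1) - 1 ≤ (σ : ℝ) + 1 ∧
      6 ≤ (2 * (τ : ℝ) + 1) * η ∧ 1 ≤ τ := by
  obtain ⟨τ, hτ⟩ := exists_nat_ge (6 / η + 1 / γ + 1)
  have h6 : 0 < 6 / η := by positivity
  have h1 : 0 < 1 / γ := by positivity
  have h2 : 6 / η * η = 6 := by field_simp
  have h3 : γ * (1 / γ) = 1 := by field_simp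
  have h4 : 1 ≤ γ * (τ + 1) := by nlinarith
  have h5 : 1 ≤ ⌊γ * ((τ : ℝ) + 1)⌋₊ := Nat.le_floor (by exact_mod_cast h4)
  obtain ⟨σ, hσ⟩ := Nat.exists_eq_add_of_le' h5
  have h7 := Nat.floor_le (a := γ * ((τ : ℝ) + 1)) (by linarith)
  have h8 := Nat.lt_floor_add_one (γ * ((τ : ℝ) + 1))
  rw [hσ] at h7 h8
  push_cast at h7 h8
  refine ⟨τ, σ, h7, by linarith, by nlinarith, ?_⟩
  have : (1 : ℝ) ≤ τ := by linarith
  exact_mod_cast this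

theorem stmt5 (γ : ℝ) (hγ0 : 0 < γ) (hγ1 : γ < 1) (η : ℝ) (hη : 0 < η) (r₀ N₀ : ℕ) :
    ∃ (a b : ℕ) (E : Finset (Fin a × Fin b)) (K : ℝ),
      N₀ ≤ a ∧ 1 ≤ K ∧
      -- (a) the Sherali-Adams solution, with p = ⌈|A|^γ⌉
      (∃ y : Finset (Fin a ⊕ Fin b) → ℝ,
        y ∅ = 1 ∧
        ∀ S T : Finset (Fin a ⊕ Fin b), Disjoint S T → S.card + T.card ≤ r₀ →
          ((∑ i : Fin b, ∑ J ∈ T.powerset, (-1 : ℝ) ^ J.card * y (S ∪ J ∪ {Sum.inr i})) ≤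
              K * ∑ J ∈ T.powerset, (-1 : ℝ) ^ J.card * y (S ∪ J)) ∧
          ((⌈(a : ℝ) ^ γ⌉₊ : ℝ) * (∑ J ∈ T.powerset, (-1 : ℝ) ^ J.card * y (S ∪ J)) ≤
              ∑ j : Fin a, ∑ J ∈ T.powerset, (-1 : ℝ) ^ J.card * y (S ∪ J ∪ {Sum.inl j})) ∧
          (∀ ji ∈ E,
            ∑ J ∈ T.powerset, (-1 : ℝ) ^ J.card * y (S ∪ J ∪ {Sum.inl ji.1}) ≤
              ∑ J ∈ T.powerset, (-1 : ℝ) ^ J.card * y (S ∪ J ∪ {Sum.inr ji.2})) ∧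
          (0 ≤ ∑ J ∈ T.powerset, (-1 : ℝ) ^ J.card * y (S ∪ J)) ∧
          (∑ J ∈ T.powerset, (-1 : ℝ) ^ J.card * y (S ∪ J) ≤ 1)) ∧
      -- (b) every p-subset of A has at least K · |A|^(γ(1-γ)-η) neighbors in B;
      -- in particular the integrality gap is at least |A|^(γ(1-γ)-η)
      (∀ U : Finset (Fin a), U.card = ⌈(a : ℝ) ^ γ⌉₊ →
        K * (a : ℝ) ^ (γ * (1 - γ) - η) ≤ ((nbrs E U).card : ℝ)) := by
  obtain ⟨τ, σ, hσ1, hσ2, hτη, hτ1⟩ := exists_exponents hγ0 hη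
  obtain ⟨d, hd⟩ : ∃ d, d = 2 * τ + 1 + 2 * (σ + 1) + 1 := ⟨_, rfl⟩
  obtain ⟨e, he⟩ : ∃ e, d * (σ + 1) = e + (τ + 1) := by
    refine Nat.exists_eq_add_of_le' ?_
    exact (by omega : τ + 1 ≤ d).trans (Nat.le_mul_of_pos_right _ (Nat.succ_pos _))
  obtain ⟨Q, hQ⟩ : ∃ Q, Q = (σ + 1 + (τ + 1)) * (r₀ + 3) := ⟨_, rfl⟩
  obtain ⟨M, hM⟩ : ∃ M, M = 8 * Q + 1 := ⟨_, rfl⟩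
  obtain ⟨C, hC⟩ : ∃ C, C = (4 * e + 1) * Q := ⟨_, rfl⟩
  have hτ0 : (1 : ℝ) ≤ τ := by exact_mod_cast hτ1
  -- The exponent `x` makes `q ^ (2 * τ + 1) * θ ^ (τ + 1)`, the fractional size of the left
  -- side for `θ = q ^ (-x)`, exceed `p` by a factor `q ^ (1 - γ)`.
  obtain ⟨x, hx⟩ : ∃ x : ℝ, x * (τ + 1) = 2 * τ * (1 - γ) :=
    ⟨2 * τ * (1 - γ) / (τ + 1), by field_simp⟩
  have hx0 : 0 < x := by
    have : 0 < x * (τ + 1) := by rw [hx]; nlinarith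
    exact pos_of_mul_pos_left this (by linarith)
  have hx2 : x < 2 := by nlinarith
  have hcast := tendsto_natCast_atTop_atTop (R := ℝ)
  -- All requirements hold for large `q`: the exponents `x`, `2 - x` and `1 - γ` are positive.
  obtain ⟨q, hq4, hqN, hqM, hqC, hqs, hqx, hqCθ, hqγ⟩ := ((Filter.eventually_ge_atTop 4).and <|
    (Filter.eventually_ge_atTop N₀).and <|
    (Filter.eventually_ge_atTop
      (4 * ((M + 1) * ((e + 1) * M + 1)) * ((e + 1) * M + 1) ^ (d * (σ + 1) * M))).and <|
    (Filter.eventually_ge_atTop (2 * (r₀ * (4 * (τ + 1) * (C + 1) ^ (τ + 1))))).and <|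
    (Filter.eventually_ge_atTop (2 ^ (σ + 2))).and <|
    (((tendsto_rpow_atTop hx0).comp hcast).eventually_ge_atTop (2 ^ (r₀ + 3))).and <|
    (((tendsto_rpow_atTop (sub_pos.2 hx2)).comp hcast).eventually_ge_atTop ((C : ℝ) + 1)).and <|
    (((tendsto_rpow_atTop (sub_pos.2 hγ1)).comp hcast).eventually_ge_atTop 8)).exists
  simp only [Function.comp_apply] at hqx hqCθ hqγ
  have hq1 : (1 : ℝ) ≤ q := by exact_mod_cast (by omega : 1 ≤ q)
  have hq0 : (0 : ℝ) < q := by linarith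
  obtain ⟨θ, hθ⟩ : ∃ θ : ℝ, θ = (q : ℝ) ^ (-x) := ⟨_, rfl⟩
  have hθ0 : 0 < θ := by rw [hθ]; positivity
  have hnθ : ((q ^ 2 : ℕ) : ℝ) * θ = (q : ℝ) ^ (2 - x) := by
    rw [hθ, sub_eq_add_neg, Real.rpow_add hq0]
    norm_num
  have hNpow : ∀ z : ℝ, ((q ^ (2 * τ + 1) : ℕ) : ℝ) ^ z = (q : ℝ) ^ ((2 * τ + 1) * z) := by
    intro z
    rw [Nat.cast_pow, ← Real.rpow_natCast_mul hq0.le]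
    push_cast
    rfl
  obtain ⟨p, hp⟩ : ∃ p, p = ⌈((q ^ (2 * τ + 1) : ℕ) : ℝ) ^ γ⌉₊ := ⟨_, rfl⟩
  have hp1 : q ^ (2 * σ + 1) ≤ p := by
    have h1 : ((q ^ (2 * σ + 1) : ℕ) : ℝ) ≤ ((q ^ (2 * τ + 1) : ℕ) : ℝ) ^ γ := by
      rw [hNpow, Nat.cast_pow, ← Real.rpow_natCast]
      refine Real.rpow_le_rpow_of_exponent_le hq1 ?_
      push_cast
      nlinarith
    rw [hp]
    exact_mod_cast h1.trans (Nat.le_ceil _)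
  have hp2 : (p : ℝ) ≤ ((q ^ (2 * τ + 1) : ℕ) : ℝ) / 4 * θ ^ (τ + 1) := by
    have h1 : (1 : ℝ) ≤ ((q ^ (2 * τ + 1) : ℕ) : ℝ) ^ γ :=
      Real.one_le_rpow (by exact_mod_cast Nat.one_le_pow _ _ (by omega)) hγ0.le
    have h2 : (p : ℝ) < ((q ^ (2 * τ + 1) : ℕ) : ℝ) ^ γ + 1 := by
      rw [hp]; exact Nat.ceil_lt_add_one (by linarith)
    have h3 : ((q ^ (2 * τ + 1) : ℕ) : ℝ) * θ ^ (τ + 1) =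
        (q : ℝ) ^ (1 - γ) * ((q ^ (2 * τ + 1) : ℕ) : ℝ) ^ γ := by
      rw [hNpow, ← Real.rpow_add hq0, hθ, ← Real.rpow_mul_natCast hq0.le, Nat.cast_pow,
        ← Real.rpow_natCast, ← Real.rpow_add hq0]
      congr 1
      push_cast
      linarith
    nlinarith
  obtain ⟨φ, hφ1, hφ2⟩ := exists_hypergraph hq4 hd he hqM hp1
  have hne : Nonempty (Fin (q ^ 2)) := ⟨⟨0, by positivity⟩⟩
  refine ⟨q ^ (2 * τ + 1), (q ^ 2) ^ (σ + 1),
    univ.filter fun ji => ∃ c, φ ji.1 c = finFunctionFinEquiv.symm ji.2,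
    2 * (2 * (((q ^ 2 : ℕ) : ℝ) * θ)) ^ (σ + 1), ?_, ?_, ?_, ?_⟩
  · exact hqN.trans (Nat.le_self_pow (by omega) q)
  · have h1 : 1 ≤ 2 * (((q ^ 2 : ℕ) : ℝ) * θ) := by
      rw [hnθ]
      have : (0 : ℝ) ≤ C := Nat.cast_nonneg C
      linarith
    have h2 := one_le_pow₀ h1 (n := σ + 1)
    linarith
  · rw [← hp]
    refine exists_sheraliAdams φ finFunctionFinEquiv.symm hφ1 he hQ hM hC hθ0 ?_ ?_ ?_
      (Nat.cast_nonneg p) (by simpa using hp2) _ fun ji hji => (mem_filter.1 hji).2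
    · have h1 : θ * (q : ℝ) ^ x = 1 := by
        rw [hθ, ← Real.rpow_add hq0]; simp
      have h2 : θ * 2 ^ (r₀ + 3) ≤ 1 := by
        rw [← h1]; gcongr
      rw [pow_succ] at h2
      linarith
    · rw [hnθ]; linarith
    · rw [Fintype.card_fin]
      calc 2 * (r₀ * (4 * (τ + 1) * ((C + 1) ^ (τ + 1) * (q ^ 2) ^ τ)))
          = 2 * (r₀ * (4 * (τ + 1) * (C + 1) ^ (τ + 1))) * q ^ (2 * τ) := by
            rw [← pow_mul]; ring
        _ ≤ q * q ^ (2 * τ) := Nat.mul_le_mul_right _ hqC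
        _ = q ^ (2 * τ + 1) := by ring
  · intro U hU
    rw [card_nbrs]
    have h1 : ((q ^ (2 * σ + 1) : ℕ) : ℝ) ≤
        ((U.biUnion fun j => univ.image (φ j)).card : ℝ) := by
      exact_mod_cast hφ2 U (hU.trans hp.symm)
    refine le_trans ?_ h1
    have h2 : (2 : ℝ) ^ (σ + 2) ≤ q := by exact_mod_cast hqs
    calc 2 * (2 * (((q ^ 2 : ℕ) : ℝ) * θ)) ^ (σ + 1) *
          ((q ^ (2 * τ + 1) : ℕ) : ℝ) ^ (γ * (1 - γ) - η)
        = 2 ^ (σ + 2) * ((q : ℝ) ^ ((2 - x) * (σ + 1)) *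
            (q : ℝ) ^ ((2 * τ + 1) * (γ * (1 - γ) - η))) := by
          rw [hnθ, hNpow, mul_pow, ← Real.rpow_mul_natCast hq0.le]
          push_cast
          ring
      _ ≤ (q : ℝ) ^ (1 : ℝ) * ((q : ℝ) ^ ((2 - x) * (σ + 1)) *
            (q : ℝ) ^ ((2 * τ + 1) * (γ * (1 - γ) - η))) := by
          rw [Real.rpow_one]; gcongr
      _ = (q : ℝ) ^ (1 + ((2 - x) * (σ + 1) + (2 * τ + 1) * (γ * (1 - γ) - η))) := by
          rw [← Real.rpow_add hq0, ← Real.rpow_add hq0]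
      _ ≤ (q : ℝ) ^ ((2 * σ + 1 : ℕ) : ℝ) := by
          refine Real.rpow_le_rpow_of_exponent_le hq1 ?_
          have h3 : x * (γ * (τ + 1) - 1) ≤ x * (σ + 1) := by gcongr
          have h4 : γ * (1 - γ) ≤ 1 := by nlinarith
          have h5 : x * (γ * (τ + 1)) = γ * (2 * τ * (1 - γ)) := by rw [← hx]; ring
          push_cast
          linarith
      _ = ((q ^ (2 * σ + 1) : ℕ) : ℝ) := by rw [Real.rpow_natCast, Nat.cast_pow]
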